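/- Let T be a nice extension of ZFC and let φ, ψ be formulas which locally define inner models over T. Then there is a formula τ which locally defines an inner model over T such that τ is equivalent to the relativization ψ^φ, provably over T. -/

import Mathlib

/- ## A framework for transitive class/set models of fragments of ZFC,
     inside the universe `ZFSet` of ZF sets. -/

open FirstOrder FirstOrder.Language

/-- The language of set theory: a single binary relation symbol `∈`. -/
inductive SetRelSym : ℕ → Type
  | mem : SetRelSym 2

/-- The first-order language of set theory. -/
def setL : FirstOrder.Language := ⟨fun _ => Empty, SetRelSym⟩

/-- Evaluation of a term of the language of set theory (terms are just variables). -/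
def tval {n : ℕ} (v : Fin n → ZFSet) : setL.Term (Empty ⊕ Fin n) → ZFSet
  | .var (Sum.inl e) => e.elim
  | .var (Sum.inr i) => v i
  | .func f _ => f.elim

/-- Tarskian satisfaction of a formula of the language of set theory in a class `S` of
ZF-sets (equipped with true membership), under the assignment `v`. -/
def ZSat (S : Set ZFSet) : ∀ {n : ℕ}, setL.BoundedFormula Empty n → (Fin n → ZFSet) → Prop
  | _, .falsum, _ => False
  | _, .equal t u, v => tval v t = tval v u
  | _, .rel R ts, v =>
      match R with
      | SetRelSym.mem => tval v (ts 0) ∈ tval v (ts 1)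
  | _, .imp φ ψ, v => ZSat S φ v → ZSat S ψ v
  | _, .all φ, v => ∀ x ∈ S, ZSat S φ (Fin.snoc v x)

/-- Satisfaction of a sentence in a class of ZF-sets. -/
def SatS (S : Set ZFSet) (σ : setL.Sentence) : Prop := ZSat S σ finZeroElim

/-- A class of ZF-sets is transitive. -/
def IsTransClass (S : Set ZFSet) : Prop := ∀ x ∈ S, ∀ y ∈ x, y ∈ S

/-- `r` is a well-ordering of the set `x`, from the point of view of the class `S`
(Kuratowski pairs code the relation; minimality is required for nonempty subsets of `x`
lying in `S`). -/
def WellOrders (S : Set ZFSet) (r x : ZFSet) : Prop :=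
  (∀ a ∈ x, ZFSet.pair a a ∉ r) ∧
  (∀ a ∈ x, ∀ b ∈ x, ∀ c ∈ x, ZFSet.pair a b ∈ r → ZFSet.pair b c ∈ r → ZFSet.pair a c ∈ r) ∧
  (∀ a ∈ x, ∀ b ∈ x, a ≠ b → (ZFSet.pair a b ∈ r ∨ ZFSet.pair b a ∈ r)) ∧
  (∀ y ∈ S, (∀ z ∈ y, z ∈ x) → y ≠ ∅ → ∃ m ∈ y, ∀ z ∈ y, ZFSet.pair z m ∉ r)

/-- `S` is a transitive model of ZFC⁻, i.e. of ZFC stated with the Replacement Scheme and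
the Well-Ordering Theorem but without the Power Set Axiom.  (Extensionality and Foundation
are automatic for transitive classes of ZF-sets.) -/
def ModelsZFCminus (S : Set ZFSet) : Prop :=
  IsTransClass S ∧
  (∅ : ZFSet) ∈ S ∧
  (∀ x ∈ S, ∀ y ∈ S, ({x, y} : ZFSet) ∈ S) ∧
  (∀ x ∈ S, (ZFSet.sUnion x : ZFSet) ∈ S) ∧
  ZFSet.omega ∈ S ∧
  (∀ (n : ℕ) (φ : setL.BoundedFormula Empty (n + 1)) (p : Fin n → ZFSet),
    (∀ i, p i ∈ S) → ∀ a ∈ S, ∃ b ∈ S, ∀ y, y ∈ b ↔ (y ∈ a ∧ ZSat S φ (Fin.snoc p y))) ∧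
  (∀ (n : ℕ) (φ : setL.BoundedFormula Empty (n + 2)) (p : Fin n → ZFSet),
    (∀ i, p i ∈ S) → ∀ a ∈ S,
      (∀ x ∈ a, ∃! y, y ∈ S ∧ ZSat S φ (Fin.snoc (Fin.snoc p x) y)) →
      ∃ b ∈ S, ∀ y, y ∈ b ↔ ∃ x ∈ a, y ∈ S ∧ ZSat S φ (Fin.snoc (Fin.snoc p x) y)) ∧
  (∀ x ∈ S, ∃ r ∈ S, WellOrders S r x)

/-- `S` is a transitive model of ZFC. -/
def ModelsZFC (S : Set ZFSet) : Prop :=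
  ModelsZFCminus S ∧ ∀ x ∈ S, ∃ p ∈ S, ∀ y, y ∈ p ↔ (y ∈ S ∧ y ⊆ x)

/-- `f` is (the graph of) a surjection of `a` onto `b`. -/
def SurjFun (f a b : ZFSet) : Prop :=
  ZFSet.IsFunc a b f ∧ ∀ y ∈ b, ∃ x ∈ a, ZFSet.pair x y ∈ f

/-- `f` is (the graph of) an injection of `a` into `b`. -/
def InjFun (f a b : ZFSet) : Prop :=
  ZFSet.IsFunc a b f ∧ ∀ x ∈ a, ∀ x' ∈ a, ∀ y, ZFSet.pair x y ∈ f → ZFSet.pair x' y ∈ f → x = x'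

/-- `f` is (the graph of) a cofinal function from `β` into the ordinal `α`. -/
def CofinalFun (f β α : ZFSet) : Prop :=
  ZFSet.IsFunc β α f ∧ ∀ ξ ∈ α, ∃ η ∈ β, ∃ ζ, ZFSet.pair η ζ ∈ f ∧ (ξ ∈ ζ ∨ ξ = ζ)

/-- `μ = cof(α)` as computed inside the class `S` (for `S = Set.univ`, the true cofinality). -/
def IsCofOf (S : Set ZFSet) (α μ : ZFSet) : Prop :=
  μ ∈ S ∧ μ.IsOrdinal ∧ (∃ f ∈ S, CofinalFun f μ α) ∧
  ∀ ν ∈ S, ZFSet.IsOrdinal ν → (∃ f ∈ S, CofinalFun f ν α) → μ ⊆ ν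

/-- `κ` is a cardinal from the point of view of the class `S`
(for `S = Set.univ`, a true cardinal). -/
def IsCardIn (S : Set ZFSet) (κ : ZFSet) : Prop :=
  κ.IsOrdinal ∧ ∀ α ∈ κ, ∀ f ∈ S, ¬ SurjFun f α κ

/-- `μ` is an (infinite) regular cardinal from the point of view of the class `S`. -/
def IsRegularIn (S : Set ZFSet) (μ : ZFSet) : Prop :=
  ZFSet.omega ⊆ μ ∧ IsCardIn S μ ∧ IsCofOf S μ μ

/-- `ν = μ⁺`, the cardinal successor of `μ`, as computed in the class `S`. -/
def CardSuccIn (S : Set ZFSet) (μ ν : ZFSet) : Prop :=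
  ν ∈ S ∧ IsCardIn S ν ∧ μ ∈ ν ∧ ∀ ξ ∈ S, IsCardIn S ξ → μ ∈ ξ → ν ⊆ ξ

/-- `μ` is the largest cardinal of the model `S`. -/
def IsLargestCardIn (S : Set ZFSet) (μ : ZFSet) : Prop :=
  μ ∈ S ∧ IsCardIn S μ ∧ ∀ x ∈ S, IsCardIn S x → x ⊆ μ

/-- `α = sup A`, for `A` a collection of ordinals: `α` is the least ordinal above all of them. -/
def IsSupOf (α : ZFSet) (A : Set ZFSet) : Prop :=
  α.IsOrdinal ∧ (∀ a ∈ A, a ⊆ α) ∧ ∀ β : ZFSet, β.IsOrdinal → (∀ a ∈ A, a ⊆ β) → α ⊆ β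

/-- `π` is an elementary embedding (for the language of set theory) from the class `S`
into the class `T`. -/
def IsElem (S T : Set ZFSet) (π : ZFSet → ZFSet) : Prop :=
  (∀ x ∈ S, π x ∈ T) ∧
  ∀ (n : ℕ) (φ : setL.BoundedFormula Empty n) (v : Fin n → ZFSet),
    (∀ i, v i ∈ S) → (ZSat S φ v ↔ ZSat T φ (fun i => π (v i)))

/-- `S` is an inner model (of ZFC): a transitive proper class model of ZFC containing
all the ordinals. -/
def IsInnerModel (S : Set ZFSet) : Prop :=
  ModelsZFC S ∧ ∀ x : ZFSet, x.IsOrdinal → x ∈ S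

/-- `μ` is a measurable cardinal from the point of view of the class `S`: there is a
`μ`-complete nonprincipal ultrafilter on `μ` in `S`. -/
def MeasurableIn (S : Set ZFSet) (μ : ZFSet) : Prop :=
  IsCardIn S μ ∧ ZFSet.omega ∈ μ ∧
  ∃ U ∈ S,
    (∀ x ∈ U, x ⊆ μ) ∧ μ ∈ U ∧ (∅ : ZFSet) ∉ U ∧
    (∀ x ∈ U, ∀ y ∈ S, y ⊆ μ → x ⊆ y → y ∈ U) ∧
    (∀ x ∈ S, ∀ y ∈ S, x ⊆ μ → y ⊆ μ → (∀ w ∈ μ, (w ∈ x ↔ w ∉ y)) → (x ∈ U ∨ y ∈ U)) ∧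
    (∀ z ∈ μ, ∃ x ∈ U, z ∉ x) ∧
    (∀ γ ∈ μ, ∀ f ∈ S,
      (∀ η ∈ γ, ∃ x ∈ U, ZFSet.pair η x ∈ f) →
      (∀ p ∈ f, ∃ η ∈ γ, ∃ x ∈ U, p = ZFSet.pair η x) →
      ∃ b ∈ U, ∀ w : ZFSet, w ∈ b ↔ (w ∈ μ ∧ ∀ η ∈ γ, ∀ x, ZFSet.pair η x ∈ f → w ∈ x))

/-- `μ` is singular from the point of view of `S`: some function in `S` maps a smaller
ordinal cofinally into `μ`. -/
def SingularIn (S : Set ZFSet) (μ : ZFSet) : Prop :=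
  ∃ γ : ZFSet, γ.IsOrdinal ∧ γ ∈ μ ∧ ∃ f ∈ S, CofinalFun f γ μ

/-- `μ` is a strong limit cardinal from the point of view of `S`: `2^κ < μ` for all `κ < μ`,
as computed in `S`. -/
def StrongLimitIn (S : Set ZFSet) (μ : ZFSet) : Prop :=
  IsCardIn S μ ∧ ZFSet.omega ∈ μ ∧
  ∀ κ ∈ μ, ∀ p ∈ S, (∀ z : ZFSet, z ∈ p ↔ (z ∈ S ∧ z ⊆ κ)) →
    ∃ α ∈ μ, ∃ f ∈ S, InjFun f p α

/-- `M` is close to `N` (`M ⊆ N` inner models): every cardinal `μ` of `N` which is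
measurable or a singular strong limit in `N` is measurable or singular in `M`, and
`μ⁺` is computed correctly by `M`, i.e. `μ^{+,M} = μ^{+,N}`. -/
def CloseTo (M N : Set ZFSet) : Prop :=
  ∀ μ ∈ N, IsCardIn N μ →
    (MeasurableIn N μ ∨ (SingularIn N μ ∧ StrongLimitIn N μ)) →
    ((MeasurableIn M μ ∨ SingularIn M μ) ∧
      ∀ ν : ZFSet, (CardSuccIn M μ ν ↔ CardSuccIn N μ ν))

/-- `t` is the transitive closure of `x`. -/
def IsTransClosureOf (t x : ZFSet) : Prop :=
  x ⊆ t ∧ t.IsTransitive ∧ ∀ u : ZFSet, x ⊆ u → u.IsTransitive → t ⊆ u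

/-- `H^S_ν`: the class of members of `S` whose transitive closure has size `< ν`,
as computed in `S`. -/
def HIn (S : Set ZFSet) (ν : ZFSet) : Set ZFSet :=
  {x | x ∈ S ∧ ∃ t ∈ S, IsTransClosureOf t x ∧ ∃ κ ∈ ν, ∃ f ∈ S, SurjFun f κ t}

/-- The von Neumann natural number `n` as a ZF-set. -/
def natZ : ℕ → ZFSet
  | 0 => ∅
  | n + 1 => insert (natZ n) (natZ n)

/-- The term given by the `i`-th bounded variable. -/
def mvar {n : ℕ} (i : Fin n) : setL.Term (Empty ⊕ Fin n) :=
  FirstOrder.Language.Term.var (Sum.inr i)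

/-- The atomic formula `v i ∈ v j`. -/
def memF {n : ℕ} (i j : Fin n) : setL.BoundedFormula Empty n :=
  FirstOrder.Language.Relations.boundedFormula₂ SetRelSym.mem (mvar i) (mvar j)

/-- Δ₀ (bounded) formulas of the language of set theory. -/
inductive IsDelta0 : ∀ {n : ℕ}, setL.BoundedFormula Empty n → Prop
  | falsum {n : ℕ} : IsDelta0 (n := n) FirstOrder.Language.BoundedFormula.falsum
  | equal {n : ℕ} (t u : setL.Term (Empty ⊕ Fin n)) :
      IsDelta0 (FirstOrder.Language.BoundedFormula.equal t u)
  | rel {n l : ℕ} (R : setL.Relations l) (ts : Fin l → setL.Term (Empty ⊕ Fin n)) :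
      IsDelta0 (FirstOrder.Language.BoundedFormula.rel R ts)
  | imp {n : ℕ} {φ ψ : setL.BoundedFormula Empty n} :
      IsDelta0 φ → IsDelta0 ψ → IsDelta0 (φ.imp ψ)
  | ball {n : ℕ} (j : Fin n) {φ : setL.BoundedFormula Empty (n + 1)} :
      IsDelta0 φ →
      IsDelta0 (((memF (Fin.last n) j.castSucc).imp φ).all)

mutual
  /-- Σ_k formulas of the Levy hierarchy. -/
  inductive LevySigma : ℕ → ∀ {n : ℕ}, setL.BoundedFormula Empty n → Prop
    | delta0 {n : ℕ} {φ : setL.BoundedFormula Empty n} : IsDelta0 φ → LevySigma 0 φ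
    | ofPi {k : ℕ} {n : ℕ} {φ : setL.BoundedFormula Empty n} :
        LevyPi k φ → LevySigma (k + 1) φ
    | ex {k : ℕ} {n : ℕ} {φ : setL.BoundedFormula Empty (n + 1)} :
        LevySigma (k + 1) φ → LevySigma (k + 1) φ.ex

  /-- Π_k formulas of the Levy hierarchy. -/
  inductive LevyPi : ℕ → ∀ {n : ℕ}, setL.BoundedFormula Empty n → Prop
    | delta0 {n : ℕ} {φ : setL.BoundedFormula Empty n} : IsDelta0 φ → LevyPi 0 φ
    | ofSigma {k : ℕ} {n : ℕ} {φ : setL.BoundedFormula Empty n} :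
        LevySigma k φ → LevyPi (k + 1) φ
    | all {k : ℕ} {n : ℕ} {φ : setL.BoundedFormula Empty (n + 1)} :
        LevyPi (k + 1) φ → LevyPi (k + 1) φ.all
end

/-- `L[A]`, for `A` a set (of ordinals): the smallest inner model containing `A`. -/
def LSet (A : ZFSet) : Set ZFSet :=
  ⋂₀ {W : Set ZFSet | IsInnerModel W ∧ A ∈ W}

/-- The sentence "for every set of ordinals `A`, `L[A] ⊨ θ`", interpreted in the
transitive class `S`.  (For `A ∈ S`, `L[A]` as computed in `S` is the true `L[A]`.) -/
def NiceHolds (θ : setL.Sentence) (S : Set ZFSet) : Prop :=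
  ∀ A ∈ S, (∀ x ∈ A, ZFSet.IsOrdinal x) → SatS (LSet A) θ

/-- The nice extension `T = ZFC + "∀ set of ordinals A, L[A] ⊨ θ"` of ZFC holds in the
transitive class `S`. -/
def THolds (θ : setL.Sentence) (S : Set ZFSet) : Prop :=
  ModelsZFC S ∧ NiceHolds θ S

/-- `C` is an inner model of ZFC from the point of view of the inner model `S`. -/
def InnerModelIn (S C : Set ZFSet) : Prop :=
  C ⊆ S ∧ ModelsZFC C ∧ ∀ x : ZFSet, x.IsOrdinal → x ∈ C

/-- The class defined, in the transitive class model `S`, by the formula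
`φ(v) = ∃μ (μ is a strong limit cardinal ∧ v ∈ H_μ ∧ H_μ ⊨ θ(v))`, where `θ` is the
witnessing formula.  This is `φ^S`. -/
def locClass (S : Set ZFSet) (θ : setL.BoundedFormula Empty 1) : Set ZFSet :=
  {x | ∃ μ ∈ S, StrongLimitIn S μ ∧ x ∈ HIn S μ ∧ ZSat (HIn S μ) θ ![x]}

universe u

/-- The formula `φ(v) = ∃μ (μ strong limit ∧ v ∈ H_μ ∧ H_μ ⊨ θ(v))` (determined by its
witnessing formula `θ`) locally defines an inner model over the nice extension
`T = ZFC + "∀ A, L[A] ⊨ θT"`:  provably in `T`, `φ^V` is an inner model of ZFC and, for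
every strong limit cardinal `μ`, `H^{φ^V}_μ = θ^{H_μ}`. -/
def LocallyDefinesInner (θT : setL.Sentence) (θ : setL.BoundedFormula Empty 1) : Prop :=
  ∀ S : Set ZFSet.{u}, IsInnerModel S → THolds θT S →
    InnerModelIn S (locClass S θ) ∧
    ∀ μ ∈ S, StrongLimitIn S μ →
      HIn (locClass S θ) μ = {x | x ∈ HIn S μ ∧ ZSat (HIn S μ) θ ![x]}

/-! For a strong limit `μ`, the class `H_μ` of `M = φ^V` is definable over `H_μ` by `θφ`, so the
formula `θτ = θφ ∧ θψ^θφ` evaluates `θψ` in `H^M_μ`. Comparing `τ` with `ψ^M` requires the strong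
limits of `V` and of `M` to be sufficiently alike. A strong limit `μ` of `V` remains one in `M`: for
`κ < μ`, the ordinal onto which `M` collapses a well-order of `P(κ)^M ⊆ P(κ)` is below `μ`, because
`V` injects `P(κ)` into an ordinal below `μ`. Conversely, every strong limit of `M` is below one
of `V`, because each ordinal belongs to `M` and hence to some `H_μ`; enlarging `μ` does not change
the verdict of `θψ` on a point of `H^M_μ`, by local definability of `ψ` over `M`. -/

open Set

/-! ### Satisfaction in a class as first-order satisfaction -/

/-- The class `W` as a first-order structure, with true membership. -/
instance memStructure (W : Set ZFSet.{u}) : setL.Structure W where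
  funMap f := f.elim
  RelMap | .mem, v => (v 0 : ZFSet) ∈ (v 1 : ZFSet)

section Satisfaction

variable {W : Set ZFSet.{u}} {n : ℕ}

theorem tval_coe (v : Fin n → W) : ∀ t : setL.Term (Empty ⊕ Fin n),
    tval (fun i => (v i : ZFSet)) t = (t.realize (Sum.elim default v) : W)
  | .var (Sum.inl e) => e.elim
  | .var (Sum.inr _) => rfl
  | .func f _ => f.elim

theorem coe_snoc (v : Fin n → W) (x : W) :
    (fun i => ((Fin.snoc v x : Fin (n + 1) → W) i : ZFSet)) =
      Fin.snoc (fun i => (v i : ZFSet)) (x : ZFSet) :=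
  Fin.comp_snoc (Subtype.val : W → ZFSet) v x

theorem zSat_iff_realize : ∀ {n : ℕ} (φ : setL.BoundedFormula Empty n) (v : Fin n → W),
    ZSat W φ (fun i => v i) ↔ φ.Realize default v
  | _, .falsum, _ => Iff.rfl
  | _, .equal t s, v => by
    simp only [ZSat, tval_coe, BoundedFormula.Realize, Subtype.ext_iff]
  | _, .rel .mem ts, v => by
    simp only [ZSat, tval_coe]; rfl
  | _, .imp φ ψ, v => imp_congr (zSat_iff_realize φ v) (zSat_iff_realize ψ v)
  | _, .all φ, v => by
    simp only [ZSat, BoundedFormula.Realize, ← zSat_iff_realize φ, coe_snoc, Subtype.forall]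

theorem zSat_inf (φ ψ : setL.BoundedFormula Empty n) (v : Fin n → ZFSet) :
    ZSat W (φ ⊓ ψ) v ↔ ZSat W φ v ∧ ZSat W ψ v := by
  change ¬ (ZSat W φ v → ¬ ZSat W ψ v) ↔ _
  rw [Classical.not_imp, not_not]

/-- The formula `χ(vₙ)`: `χ` evaluated at the last of the variables `v₀, …, vₙ`. -/
def atLast (χ : setL.BoundedFormula Empty 1) : setL.BoundedFormula Empty (n + 1) :=
  BoundedFormula.relabel (k := 0) (Sum.elim Empty.elim fun _ => .inr (Fin.last n)) χ.toFormula

theorem realize_atLast (χ : setL.BoundedFormula Empty 1) (v : Fin n → W) (x : W) :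
    (atLast χ).Realize default (Fin.snoc v x : Fin (n + 1) → W) ↔ χ.Realize default ![x] := by
  have hvars : Sum.elim (default : Empty → W) ((Fin.snoc v x : Fin (n + 1) → W) ∘ Fin.castAdd 0) ∘
      Sum.elim Empty.elim (fun _ => .inr (Fin.last n)) = Sum.elim default ![x] := by
    funext i
    match i with
    | .inr 0 => exact Fin.snoc_last (α := fun _ => W) x v
  rw [atLast, BoundedFormula.realize_relabel, hvars]
  exact (iff_of_eq (congrArg _ (Subsingleton.elim _ _))).trans
    (BoundedFormula.realize_toFormula χ _)

theorem zSat_atLast (χ : setL.BoundedFormula Empty 1) (v : Fin n → W) (x : W) :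
    ZSat W (atLast χ) (Fin.snoc (fun i => (v i : ZFSet)) (x : ZFSet)) ↔ ZSat W χ ![x] := by
  have hx : ![(x : ZFSet)] = fun i => ((![x] i : W) : ZFSet) := by
    funext i; fin_cases i; rfl
  rw [hx, ← coe_snoc, zSat_iff_realize, zSat_iff_realize, realize_atLast]

/-- The subclass `χ^W` of `W` defined over `(W, ∈)` by the formula `χ`. -/
def definedClass (W : Set ZFSet.{u}) (χ : setL.BoundedFormula Empty 1) : Set ZFSet.{u} :=
  {x | x ∈ W ∧ ZSat W χ ![x]}

/-- The relativization `φ^χ`: every quantifier of `φ` is restricted to the class `χ`. -/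
def relativize (χ : setL.BoundedFormula Empty 1) :
    ∀ {n : ℕ}, setL.BoundedFormula Empty n → setL.BoundedFormula Empty n
  | _, .falsum => .falsum
  | _, .equal t s => .equal t s
  | _, .rel R ts => .rel R ts
  | _, .imp φ ψ => (relativize χ φ).imp (relativize χ ψ)
  | _, .all φ => ((atLast χ).imp (relativize χ φ)).all

theorem zSat_relativize (χ : setL.BoundedFormula Empty 1) :
    ∀ {n : ℕ} (φ : setL.BoundedFormula Empty n) (v : Fin n → W),
      ZSat W (relativize χ φ) (fun i => v i) ↔ ZSat (definedClass W χ) φ (fun i => v i)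
  | _, .falsum, _ => Iff.rfl
  | _, .equal _ _, _ => Iff.rfl
  | _, .rel .mem _, _ => Iff.rfl
  | _, .imp φ ψ, v => imp_congr (zSat_relativize χ φ v) (zSat_relativize χ ψ v)
  | _, .all φ, v => by
    simp only [relativize, ZSat, definedClass, mem_ofPred_eq, and_imp]
    refine forall₂_congr fun x hx => ?_
    lift x to W using hx
    rw [zSat_atLast, ← coe_snoc, zSat_relativize χ φ, definedClass]

theorem definedClass_inf_relativize (W : Set ZFSet.{u}) (θ χ : setL.BoundedFormula Empty 1) :
    definedClass W (θ ⊓ relativize θ χ) = definedClass (definedClass W θ) χ := by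
  ext x
  change x ∈ W ∧ ZSat W (θ ⊓ relativize θ χ) ![x] ↔
    (x ∈ W ∧ ZSat W θ ![x]) ∧ ZSat (definedClass W θ) χ ![x]
  rw [zSat_inf, ← and_assoc]
  refine and_congr_right fun hx => ?_
  have hv : ![x] = fun i => ((![⟨x, hx.1⟩] i : W) : ZFSet) := by
    funext i; fin_cases i; rfl
  rw [hv, zSat_relativize]

end Satisfaction

/-! ### Definability with parameters -/

theorem eq_upair_iff {x y z : ZFSet.{u}} :
    x = {y, z} ↔ y ∈ x ∧ z ∈ x ∧ ∀ w ∈ x, w = y ∨ w = z := by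
  refine ⟨by rintro rfl; simp, fun ⟨hy, hz, h⟩ => ZFSet.ext fun w => ?_⟩
  rw [ZFSet.mem_pair]
  exact ⟨h w, by rintro (rfl | rfl) <;> assumption⟩

theorem eq_pair_iff {p x y : ZFSet.{u}} :
    p = ZFSet.pair x y ↔ ∃ s ∈ p, s = {x, x} ∧ ∃ t ∈ p, t = {x, y} ∧ p = {s, t} := by
  simp only [ZFSet.pair, ZFSet.pair_eq_singleton]
  constructor
  · rintro rfl
    simp
  · rintro ⟨_, -, rfl, _, -, rfl, h⟩
    exact h

/-- `P` is definable over `(W, ∈)` by a first-order formula with parameters from `W`. -/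
def DefinablePred {α : Type} (W : Set ZFSet.{u}) (P : (α → W) → Prop) : Prop :=
  (univ : Set W).Definable setL {v | P v}

namespace DefinablePred

variable {α : Type} {W : Set ZFSet.{u}} {P Q : (α → W) → Prop} {f g h : (α → W) → W}

theorem congr (hP : DefinablePred W P) (h : ∀ v, Q v ↔ P v) : DefinablePred W Q :=
  funext (fun v => propext (h v)) ▸ hP

theorem not (hP : DefinablePred W P) : DefinablePred W fun v => ¬ P v := hP.compl

theorem and (hP : DefinablePred W P) (hQ : DefinablePred W Q) :
    DefinablePred W fun v => P v ∧ Q v := hP.inter hQ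

theorem or (hP : DefinablePred W P) (hQ : DefinablePred W Q) :
    DefinablePred W fun v => P v ∨ Q v := hP.union hQ

theorem imp (hP : DefinablePred W P) (hQ : DefinablePred W Q) :
    DefinablePred W fun v => P v → Q v := hP.himp hQ

theorem eq (hf : univ.DefinableFun setL f := by fun_prop (disch := simp))
    (hg : univ.DefinableFun setL g := by fun_prop (disch := simp)) :
    DefinablePred W fun v => (f v : ZFSet) = g v := by
  simpa only [DefinablePred, Subtype.ext_iff] using hf.ofPred_eq hg

theorem comp {n : ℕ} {R : (Fin n → W) → Prop} (hR : DefinablePred W R)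
    {F : (α → W) → Fin n → W} (hF : univ.DefinableMap setL F) : DefinablePred W fun v => R (F v) :=
  Definable.preimage_map hF hR

theorem comp₂ {R : ZFSet.{u} → ZFSet.{u} → Prop}
    (hR : DefinablePred W fun v : Fin 2 → W => R (v 0) (v 1))
    (hf : univ.DefinableFun setL f := by fun_prop (disch := simp))
    (hg : univ.DefinableFun setL g := by fun_prop (disch := simp)) :
    DefinablePred W fun v => R (f v) (g v) :=
  hR.comp (F := fun v => ![f v, g v]) (by simp [DefinableMap, hf, hg])

theorem comp₃ {R : ZFSet.{u} → ZFSet.{u} → ZFSet.{u} → Prop}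
    (hR : DefinablePred W fun v : Fin 3 → W => R (v 0) (v 1) (v 2))
    (hf : univ.DefinableFun setL f := by fun_prop (disch := simp))
    (hg : univ.DefinableFun setL g := by fun_prop (disch := simp))
    (hh : univ.DefinableFun setL h := by fun_prop (disch := simp)) :
    DefinablePred W fun v => R (f v) (g v) (h v) :=
  hR.comp (F := fun v => ![f v, g v, h v]) (by simp [DefinableMap, Fin.forall_fin_succ, hf, hg, hh])

theorem mem (hf : univ.DefinableFun setL f := by fun_prop (disch := simp))
    (hg : univ.DefinableFun setL g := by fun_prop (disch := simp)) :
    DefinablePred W fun v => (f v : ZFSet) ∈ (g v : ZFSet) := by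
  have hmem : (∅ : Set W).Definable setL {v : Fin 2 → W | (v 0 : ZFSet) ∈ (v 1 : ZFSet)} :=
    empty_definable_iff.2 ⟨Relations.formula₂ SetRelSym.mem (.var 0) (.var 1), by ext v; rfl⟩
  exact comp₂ (R := (· ∈ ·)) (hmem.mono (empty_subset _)) hf hg

theorem all {P : (α → W) → ZFSet → Prop}
    (hP : DefinablePred W fun v : α ⊕ Unit → W => P (fun i => v (.inl i)) (v (.inr ()))) :
    DefinablePred W fun v => ∀ x ∈ W, P v x :=
  congr hP.forall_of_finite fun _ =>
    ⟨fun h u => h _ (u ()).2, fun h x hx => h fun _ => ⟨x, hx⟩⟩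

theorem ex {P : (α → W) → ZFSet → Prop}
    (hP : DefinablePred W fun v : α ⊕ Unit → W => P (fun i => v (.inl i)) (v (.inr ()))) :
    DefinablePred W fun v => ∃ x ∈ W, P v x :=
  congr hP.exists_of_finite fun _ =>
    ⟨fun ⟨x, hx, h⟩ => ⟨fun _ => ⟨x, hx⟩, h⟩, fun ⟨u, h⟩ => ⟨_, (u ()).2, h⟩⟩

theorem ball (hW : IsTransClass W) {P : (α → W) → ZFSet → Prop}
    (hP : DefinablePred W fun v : α ⊕ Unit → W => P (fun i => v (.inl i)) (v (.inr ())))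
    (hf : univ.DefinableFun setL (fun v : α ⊕ Unit → W => f fun i => v (.inl i)) := by
      fun_prop (disch := simp)) :
    DefinablePred W fun v => ∀ x ∈ (f v : ZFSet), P v x :=
  (all (P := fun v x => x ∈ (f v : ZFSet) → P v x)
    (.imp (.mem (DefinableFun.proj _) hf) hP)).congr fun v =>
    ⟨fun h x _ => h x, fun h x hx => h x (hW _ (f v).2 x hx) hx⟩

theorem bex (hW : IsTransClass W) {P : (α → W) → ZFSet → Prop}
    (hP : DefinablePred W fun v : α ⊕ Unit → W => P (fun i => v (.inl i)) (v (.inr ())))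
    (hf : univ.DefinableFun setL (fun v : α ⊕ Unit → W => f fun i => v (.inl i)) := by
      fun_prop (disch := simp)) :
    DefinablePred W fun v => ∃ x ∈ (f v : ZFSet), P v x :=
  (ex (P := fun v x => x ∈ (f v : ZFSet) ∧ P v x)
    (.and (.mem (DefinableFun.proj _) hf) hP)).congr fun v =>
    ⟨fun ⟨x, hx, h⟩ => ⟨x, hW _ (f v).2 x hx, hx, h⟩, fun ⟨x, _, hx, h⟩ => ⟨x, hx, h⟩⟩

theorem eq_upair (hW : IsTransClass W)
    (hf : univ.DefinableFun setL f := by fun_prop (disch := simp))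
    (hg : univ.DefinableFun setL g := by fun_prop (disch := simp))
    (hh : univ.DefinableFun setL h := by fun_prop (disch := simp)) :
    DefinablePred W fun v => (f v : ZFSet) = {(g v : ZFSet), (h v : ZFSet)} := by
  refine comp₃ (R := fun x y z => x = {y, z}) ?_ hf hg hh
  simp only [eq_upair_iff]
  exact .and .mem (.and .mem (.ball hW (.or .eq .eq)))

theorem eq_pair (hW : IsTransClass W)
    (hf : univ.DefinableFun setL f := by fun_prop (disch := simp))
    (hg : univ.DefinableFun setL g := by fun_prop (disch := simp))
    (hh : univ.DefinableFun setL h := by fun_prop (disch := simp)) :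
    DefinablePred W fun v => (f v : ZFSet) = ZFSet.pair (g v) (h v) := by
  refine comp₃ (R := fun x y z => x = ZFSet.pair y z) ?_ hf hg hh
  simp only [eq_pair_iff]
  exact .bex hW (.and (.eq_upair hW) (.bex hW (.and (.eq_upair hW) (.eq_upair hW))))

theorem pair_mem (hW : IsTransClass W)
    (hf : univ.DefinableFun setL f := by fun_prop (disch := simp))
    (hg : univ.DefinableFun setL g := by fun_prop (disch := simp))
    (hh : univ.DefinableFun setL h := by fun_prop (disch := simp)) :
    DefinablePred W fun v => ZFSet.pair (f v) (g v) ∈ (h v : ZFSet) := by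
  refine comp₃ (R := fun x y z => ZFSet.pair x y ∈ z) ?_ hf hg hh
  have h : DefinablePred W fun v : Fin 3 → W => ∃ p ∈ (v 2 : ZFSet), p = ZFSet.pair (v 0) (v 1) :=
    .bex hW (.eq_pair hW)
  exact h.congr fun v => exists_eq_right.symm

theorem exists_formula {n : ℕ} {P : (Fin n → W) → Prop} (hP : DefinablePred W P) :
    ∃ (k : ℕ) (p : Fin k → W) (φ : setL.BoundedFormula Empty (k + n)),
      ∀ v : Fin n → W, ZSat W φ (fun i => (Fin.append p v i : W)) ↔ P v := by
  obtain ⟨A, -, hA⟩ := definable_iff_finitely_definable.1 hP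
  obtain ⟨φ, hφ⟩ := definable_iff_exists_formula_sum.1 hA
  let e : A ≃ Fin A.card := A.equivFin
  let p : Fin A.card → W := fun i => e.symm i
  let vars : A ⊕ Fin n → Empty ⊕ Fin (A.card + n) :=
    Sum.elim (fun a => .inr (Fin.castAdd n (e a))) fun i => .inr (Fin.natAdd A.card i)
  refine ⟨A.card, p, BoundedFormula.relabel (k := 0) vars φ, fun v => ?_⟩
  have hvars : Sum.elim (default : Empty → W) (Fin.append p v ∘ Fin.castAdd 0) ∘ vars =
      Sum.elim Subtype.val v := by
    funext i
    match i with
    | .inl a =>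
      change Fin.append p v (Fin.castAdd n (e a)) = a
      rw [Fin.append_left]
      exact congrArg Subtype.val (e.symm_apply_apply a)
    | .inr i => exact Fin.append_right p v i
  rw [zSat_iff_realize, BoundedFormula.realize_relabel, hvars]
  exact (iff_of_eq (congrArg _ (Subsingleton.elim _ _))).trans (Set.ext_iff.1 hφ v).symm

end DefinablePred

/-! ### Transitive models of ZFC⁻ -/

namespace ModelsZFCminus

variable {W : Set ZFSet.{u}} {a x y : ZFSet.{u}} {P : ZFSet.{u} → Prop}
  {R : ZFSet.{u} → ZFSet.{u} → Prop}

theorem isTransClass (hW : ModelsZFCminus W) : IsTransClass W := hW.1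

theorem upair_mem (hW : ModelsZFCminus W) (hx : x ∈ W) (hy : y ∈ W) : ({x, y} : ZFSet) ∈ W :=
  hW.2.2.1 x hx y hy

theorem sUnion_mem (hW : ModelsZFCminus W) (hx : x ∈ W) : (ZFSet.sUnion x : ZFSet) ∈ W :=
  hW.2.2.2.1 x hx

theorem singleton_mem (hW : ModelsZFCminus W) (hx : x ∈ W) : ({x} : ZFSet) ∈ W := by
  simpa only [ZFSet.pair_eq_singleton] using hW.upair_mem hx hx

theorem pair_mem (hW : ModelsZFCminus W) (hx : x ∈ W) (hy : y ∈ W) : ZFSet.pair x y ∈ W :=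
  hW.upair_mem (hW.singleton_mem hx) (hW.upair_mem hx hy)

theorem insert_mem (hW : ModelsZFCminus W) (hx : x ∈ W) (hy : y ∈ W) : insert x y ∈ W := by
  convert! hW.sUnion_mem (hW.upair_mem (hW.singleton_mem hx) hy) using 1
  ext z
  simp

theorem left_mem_of_pair_mem (hW : ModelsZFCminus W) (h : ZFSet.pair x y ∈ W) : x ∈ W :=
  hW.isTransClass {x} (hW.isTransClass _ h _ (by simp [ZFSet.pair])) x (by simp)

theorem right_mem_of_pair_mem (hW : ModelsZFCminus W) (h : ZFSet.pair x y ∈ W) : y ∈ W :=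
  hW.isTransClass {x, y} (hW.isTransClass _ h _ (by simp [ZFSet.pair])) y (by simp)

theorem exists_sep (hW : ModelsZFCminus W) (ha : a ∈ W)
    (hP : DefinablePred W fun v : Fin 1 → W => P (v 0)) :
    ∃ b ∈ W, ∀ y, y ∈ b ↔ y ∈ a ∧ P y := by
  obtain ⟨k, p, φ, hφ⟩ := hP.exists_formula
  obtain ⟨b, hb, hmem⟩ := hW.2.2.2.2.2.1 k φ (fun i => p i) (fun i => (p i).2) a ha
  refine ⟨b, hb, fun y => (hmem y).trans (and_congr_right fun hy => ?_)⟩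
  lift y to W using hW.isTransClass a ha y hy
  rw [← coe_snoc, ← hφ fun _ => y, Fin.append_right_eq_snoc]

theorem exists_replacement (hW : ModelsZFCminus W) (ha : a ∈ W)
    (hR : DefinablePred W fun v : Fin 2 → W => R (v 0) (v 1))
    (hfun : ∀ x ∈ a, ∃! y, y ∈ W ∧ R x y) :
    ∃ b ∈ W, ∀ y, y ∈ b ↔ ∃ x ∈ a, y ∈ W ∧ R x y := by
  obtain ⟨k, p, φ, hφ⟩ := hR.exists_formula
  have hiff : ∀ x ∈ a, ∀ y, y ∈ W ∧ ZSat W φ (Fin.snoc (Fin.snoc (fun i => p i) x) y) ↔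
      y ∈ W ∧ R x y := fun x hx y => and_congr_right fun hy => by
    lift x to W using hW.isTransClass a ha x hx
    lift y to W using hy
    have h := hφ (Fin.snoc (fun _ : Fin 1 => x) y)
    rwa [Fin.append_snoc, Fin.append_right_eq_snoc, coe_snoc, coe_snoc] at h
  obtain ⟨b, hb, hmem⟩ := hW.2.2.2.2.2.2.1 k φ (fun i => p i) (fun i => (p i).2) a ha
    fun x hx => by simpa only [hiff x hx] using hfun x hx
  exact ⟨b, hb, fun y => (hmem y).trans
    (exists_congr fun x => and_congr_right fun hx => hiff x hx y)⟩

theorem exists_graph (hW : ModelsZFCminus W) (ha : a ∈ W)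
    (hR : DefinablePred W fun v : Fin 2 → W => R (v 0) (v 1))
    (hfun : ∀ x ∈ a, ∃! y, y ∈ W ∧ R x y) :
    ∃ g ∈ W, (∀ q ∈ g, ∃ x y, q = ZFSet.pair x y) ∧
      ∀ x y, ZFSet.pair x y ∈ g ↔ x ∈ a ∧ y ∈ W ∧ R x y := by
  obtain ⟨g, hg, hmem⟩ := hW.exists_replacement ha
    (R := fun x q => ∃ y ∈ W, q = ZFSet.pair x y ∧ R x y)
    (.ex (.and (.eq_pair hW.isTransClass) hR.comp₂)) fun x hx => by
      obtain ⟨y, ⟨hy, hxy⟩, huniq⟩ := hfun x hx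
      refine ⟨ZFSet.pair x y, ⟨hW.pair_mem (hW.isTransClass a ha x hx) hy, y, hy, rfl, hxy⟩, ?_⟩
      rintro _ ⟨-, z, hz, rfl, hxz⟩
      rw [huniq z ⟨hz, hxz⟩]
  refine ⟨g, hg, fun q hq => ?_, fun x y => (hmem _).trans ⟨?_, ?_⟩⟩
  · obtain ⟨x, -, -, y, -, h, -⟩ := (hmem q).1 hq
    exact ⟨x, y, h⟩
  · rintro ⟨x', hx', -, y', hy', h, hR'⟩
    obtain ⟨rfl, rfl⟩ := ZFSet.pair_inj.1 h
    exact ⟨hx', hy', hR'⟩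
  · rintro ⟨hx, hy, hxy⟩
    exact ⟨x, hx, hW.pair_mem (hW.isTransClass a ha x hx) hy, y, hy, rfl, hxy⟩

end ModelsZFCminus

/-! ### Collapsing well-orders -/

theorem WellOrders.induction {W : Set ZFSet.{u}} {r x : ZFSet.{u}} {P : ZFSet.{u} → Prop}
    (hr : WellOrders W r x) (hW : ModelsZFCminus W) (hx : x ∈ W)
    (hP : DefinablePred W fun v : Fin 1 → W => P (v 0))
    (step : ∀ a ∈ x, (∀ w ∈ x, ZFSet.pair w a ∈ r → P w) → P a) : ∀ a ∈ x, P a := by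
  obtain ⟨y, hy, hmem⟩ := hW.exists_sep (P := fun z => ¬ P z) hx hP.not
  by_contra! hne
  obtain ⟨a, ha, hPa⟩ := hne
  have hy_ne : y ≠ ∅ := by
    rintro rfl
    exact ZFSet.notMem_empty a ((hmem a).2 ⟨ha, hPa⟩)
  obtain ⟨m, hm, hmin⟩ := hr.2.2.2 y hy (fun z hz => ((hmem z).1 hz).1) hy_ne
  obtain ⟨hmx, hPm⟩ := (hmem m).1 hm
  exact hPm (step m hmx fun w hw hwm => by_contra fun hPw => hmin w ((hmem w).2 ⟨hw, hPw⟩) hwm)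

/-- `g` is an attempt at the Mostowski collapse of `(x, r)`: if `g` sends `a` to `b`, then `g` is
defined at all `r`-predecessors of `a` in `x`, and `b` is the set of their values. -/
def IsPartialCollapse (W : Set ZFSet.{u}) (r x g : ZFSet.{u}) : Prop :=
  ∀ a ∈ W, ∀ b ∈ W, ZFSet.pair a b ∈ g →
    (∀ w ∈ x, ZFSet.pair w a ∈ r → ∃ z ∈ b, ZFSet.pair w z ∈ g) ∧
      ∀ z ∈ b, ∃ w ∈ x, ZFSet.pair w a ∈ r ∧ ZFSet.pair w z ∈ g

theorem IsPartialCollapse.insert {W : Set ZFSet.{u}} {r x g a b : ZFSet.{u}}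
    (hg : IsPartialCollapse W r x g)
    (hrel : ∀ w ∈ x, ZFSet.pair w a ∈ r → ∃ z ∈ b, ZFSet.pair w z ∈ g)
    (hmem : ∀ z ∈ b, ∃ w ∈ x, ZFSet.pair w a ∈ r ∧ ZFSet.pair w z ∈ g) :
    IsPartialCollapse W r x (insert (ZFSet.pair a b) g) := by
  intro a' ha' b' hb' hab'
  simp only [ZFSet.mem_insert_iff]
  have hvals : (∀ w ∈ x, ZFSet.pair w a' ∈ r → ∃ z ∈ b', ZFSet.pair w z ∈ g) ∧
      ∀ z ∈ b', ∃ w ∈ x, ZFSet.pair w a' ∈ r ∧ ZFSet.pair w z ∈ g := by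
    rcases ZFSet.mem_insert_iff.1 hab' with heq | hab'
    · obtain ⟨rfl, rfl⟩ := ZFSet.pair_inj.1 heq
      exact ⟨hrel, hmem⟩
    · exact hg a' ha' b' hb' hab'
  refine ⟨fun w hw hwa => ?_, fun z hz => ?_⟩
  · obtain ⟨z, hz, hwz⟩ := hvals.1 w hw hwa
    exact ⟨z, hz, .inr hwz⟩
  · obtain ⟨w, hw, hwa, hwz⟩ := hvals.2 z hz
    exact ⟨w, hw, hwa, .inr hwz⟩

/-- The Mostowski collapse of `(x, r)`, as computed in `W`, sends `a` to `b`. -/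
def CollapsesTo (W : Set ZFSet.{u}) (r x a b : ZFSet.{u}) : Prop :=
  ∃ g ∈ W, IsPartialCollapse W r x g ∧ ZFSet.pair a b ∈ g

namespace CollapsesTo

variable {W : Set ZFSet.{u}} {r x a b b' z : ZFSet.{u}}

theorem definable (hW : IsTransClass W) (hr : r ∈ W) (hx : x ∈ W) :
    DefinablePred W fun v : Fin 2 → W => CollapsesTo W r x (v 0) (v 1) := by
  lift r to W using hr
  lift x to W using hx
  exact .ex (.and (.all (.all (.imp (.pair_mem hW) (.and
    (.ball hW (.imp (.pair_mem hW) (.bex hW (.pair_mem hW))))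
    (.ball hW (.bex hW (.and (.pair_mem hW) (.pair_mem hW)))))))) (.pair_mem hW))

theorem exists_of_rel (hW : ModelsZFCminus W) (h : CollapsesTo W r x a b) {w : ZFSet.{u}}
    (hw : w ∈ x) (hwa : ZFSet.pair w a ∈ r) : ∃ z ∈ b, CollapsesTo W r x w z := by
  obtain ⟨g, hg, hcol, hab⟩ := h
  have habW := hW.isTransClass g hg _ hab
  obtain ⟨z, hz, hwz⟩ := (hcol a (hW.left_mem_of_pair_mem habW) b
    (hW.right_mem_of_pair_mem habW) hab).1 w hw hwa
  exact ⟨z, hz, g, hg, hcol, hwz⟩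

theorem exists_of_mem (hW : ModelsZFCminus W) (h : CollapsesTo W r x a b) (hz : z ∈ b) :
    ∃ w ∈ x, ZFSet.pair w a ∈ r ∧ CollapsesTo W r x w z := by
  obtain ⟨g, hg, hcol, hab⟩ := h
  have habW := hW.isTransClass g hg _ hab
  obtain ⟨w, hw, hwa, hwz⟩ := (hcol a (hW.left_mem_of_pair_mem habW) b
    (hW.right_mem_of_pair_mem habW) hab).2 z hz
  exact ⟨w, hw, hwa, g, hg, hcol, hwz⟩

theorem right_mem (hW : ModelsZFCminus W) (h : CollapsesTo W r x a b) : b ∈ W := by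
  obtain ⟨g, hg, -, hab⟩ := h
  exact hW.right_mem_of_pair_mem (hW.isTransClass g hg _ hab)

theorem unique (hW : ModelsZFCminus W) (hrW : r ∈ W) (hx : x ∈ W) (hr : WellOrders W r x)
    (ha : a ∈ x) (h : CollapsesTo W r x a b) (h' : CollapsesTo W r x a b') : b = b' := by
  have hC := definable hW.isTransClass hrW hx
  refine hr.induction hW hx
    (P := fun a => ∀ b ∈ W, ∀ b' ∈ W, CollapsesTo W r x a b → CollapsesTo W r x a b' → b = b')
    (.all (.all (.imp hC.comp₂ (.imp hC.comp₂ .eq)))) (fun a _ IH => ?_)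
    a ha b (h.right_mem hW) b' (h'.right_mem hW) h h'
  have hsub : ∀ b b', CollapsesTo W r x a b → CollapsesTo W r x a b' → b ⊆ b' := by
    intro b b' h h' z hz
    obtain ⟨w, hw, hwa, hwz⟩ := h.exists_of_mem hW hz
    obtain ⟨z', hz', hwz'⟩ := h'.exists_of_rel hW hw hwa
    rwa [IH w hw hwa z (hwz.right_mem hW) z' (hwz'.right_mem hW) hwz hwz']
  exact fun b _ b' _ h h' => le_antisymm (hsub b b' h h') (hsub b' b h' h)

theorem mem_iff (hW : ModelsZFCminus W) (hrW : r ∈ W) (hx : x ∈ W) (hr : WellOrders W r x)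
    (h : CollapsesTo W r x a b) :
    z ∈ b ↔ ∃ w ∈ x, ZFSet.pair w a ∈ r ∧ CollapsesTo W r x w z := by
  refine ⟨h.exists_of_mem hW, fun ⟨w, hw, hwa, hwz⟩ => ?_⟩
  obtain ⟨z', hz', hwz'⟩ := h.exists_of_rel hW hw hwa
  rwa [unique hW hrW hx hr hw hwz hwz']

theorem isPartialCollapse_graph (hW : ModelsZFCminus W) {I g : ZFSet.{u}}
    (hI : ∀ a ∈ I, ∀ w ∈ x, ZFSet.pair w a ∈ r → w ∈ I)
    (hg : ∀ a b, ZFSet.pair a b ∈ g ↔ a ∈ I ∧ b ∈ W ∧ CollapsesTo W r x a b) :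
    IsPartialCollapse W r x g := by
  intro a _ b _ hab
  obtain ⟨ha, -, hcol⟩ := (hg a b).1 hab
  refine ⟨fun w hw hwa => ?_, fun z hz => ?_⟩
  · obtain ⟨z, hz, hwz⟩ := hcol.exists_of_rel hW hw hwa
    exact ⟨z, hz, (hg w z).2 ⟨hI a ha w hw hwa, hwz.right_mem hW, hwz⟩⟩
  · obtain ⟨w, hw, hwa, hwz⟩ := hcol.exists_of_mem hW hz
    exact ⟨w, hw, hwa, (hg w z).2 ⟨hI a ha w hw hwa, hwz.right_mem hW, hwz⟩⟩

theorem exists_of_forall_rel (hW : ModelsZFCminus W) (hrW : r ∈ W) (hx : x ∈ W)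
    (hr : WellOrders W r x) (ha : a ∈ x)
    (IH : ∀ w ∈ x, ZFSet.pair w a ∈ r → ∃ b ∈ W, CollapsesTo W r x w b) :
    ∃ b ∈ W, CollapsesTo W r x a b := by
  have haW := hW.isTransClass x hx a ha
  obtain ⟨I, hIW, hI⟩ := hW.exists_sep (P := fun w => ZFSet.pair w a ∈ r) hx (by
    lift r to W using hrW
    lift a to W using haW
    exact .pair_mem hW.isTransClass)
  have hdef := definable hW.isTransClass hrW hx
  have hfun : ∀ w ∈ I, ∃! z, z ∈ W ∧ CollapsesTo W r x w z := fun w hw => by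
    obtain ⟨hwx, hwa⟩ := (hI w).1 hw
    obtain ⟨z, hz, hwz⟩ := IH w hwx hwa
    exact ⟨z, ⟨hz, hwz⟩, fun z' hz' => unique hW hrW hx hr hwx hz'.2 hwz⟩
  obtain ⟨b, hbW, hb⟩ := hW.exists_replacement hIW hdef hfun
  obtain ⟨g, hgW, -, hg⟩ := hW.exists_graph hIW hdef hfun
  have hI_down : ∀ a' ∈ I, ∀ w ∈ x, ZFSet.pair w a' ∈ r → w ∈ I := fun a' ha' w hw hwa' =>
    (hI w).2 ⟨hw, hr.2.1 w hw a' ((hI a').1 ha').1 a ha hwa' ((hI a').1 ha').2⟩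
  have hcol := (isPartialCollapse_graph hW hI_down hg).insert (a := a) (b := b)
    (fun w hw hwa => by
      have hwI := (hI w).2 ⟨hw, hwa⟩
      obtain ⟨z, ⟨hz, hwz⟩, -⟩ := hfun w hwI
      exact ⟨z, (hb z).2 ⟨w, hwI, hz, hwz⟩, (hg w z).2 ⟨hwI, hz, hwz⟩⟩)
    (fun z hz => by
      obtain ⟨w, hwI, hzW, hwz⟩ := (hb z).1 hz
      obtain ⟨hw, hwa⟩ := (hI w).1 hwI
      exact ⟨w, hw, hwa, (hg w z).2 ⟨hwI, hzW, hwz⟩⟩)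
  exact ⟨b, hbW, _, hW.insert_mem (hW.pair_mem haW hbW) hgW, hcol, by simp⟩

theorem existsUnique (hW : ModelsZFCminus W) (hrW : r ∈ W) (hx : x ∈ W) (hr : WellOrders W r x)
    (ha : a ∈ x) : ∃! b, b ∈ W ∧ CollapsesTo W r x a b := by
  have hdef : DefinablePred W fun v : Fin 1 → W => ∃ b ∈ W, CollapsesTo W r x (v 0) b :=
    .ex (definable hW.isTransClass hrW hx).comp₂
  obtain ⟨b, hb, hab⟩ := hr.induction hW hx hdef
    (fun a ha => exists_of_forall_rel hW hrW hx hr ha) a ha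
  exact ⟨b, ⟨hb, hab⟩, fun b' hb' => unique hW hrW hx hr ha hb'.2 hab⟩

theorem injective (hW : ModelsZFCminus W) (hrW : r ∈ W) (hx : x ∈ W) (hr : WellOrders W r x)
    {a' : ZFSet.{u}} (ha : a ∈ x) (ha' : a' ∈ x) (h : CollapsesTo W r x a b)
    (h' : CollapsesTo W r x a' b) : a = a' := by
  by_contra hne
  rcases hr.2.2.1 a ha a' ha' hne with hrel | hrel
  · exact ZFSet.mem_irrefl b ((h'.mem_iff hW hrW hx hr).2 ⟨a, ha, hrel, h⟩)
  · exact ZFSet.mem_irrefl b ((h.mem_iff hW hrW hx hr).2 ⟨a', ha', hrel, h'⟩)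

theorem isOrdinal_image (hW : ModelsZFCminus W) (hrW : r ∈ W) (hx : x ∈ W)
    (hr : WellOrders W r x) {β : ZFSet.{u}}
    (hβ : ∀ b, b ∈ β ↔ ∃ a ∈ x, b ∈ W ∧ CollapsesTo W r x a b) : β.IsOrdinal where
  isTransitive b hb z hz := by
    obtain ⟨a, -, -, hab⟩ := (hβ b).1 hb
    obtain ⟨w, hw, -, hwz⟩ := hab.exists_of_mem hW hz
    exact (hβ z).2 ⟨w, hw, hwz.right_mem hW, hwz⟩
  mem_trans' {y z b} hy hz hb := by
    obtain ⟨a, ha, -, hab⟩ := (hβ b).1 hb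
    obtain ⟨w, hw, hwa, hwz⟩ := hab.exists_of_mem hW hz
    obtain ⟨v, hv, hvw, hvy⟩ := hwz.exists_of_mem hW hy
    exact (hab.mem_iff hW hrW hx hr).2 ⟨v, hv, hr.2.1 v hv w hw a ha hvw hwa, hvy⟩

end CollapsesTo

theorem ModelsZFCminus.exists_ordinal_bijection {W : Set ZFSet.{u}} (hW : ModelsZFCminus W)
    {x : ZFSet.{u}} (hx : x ∈ W) :
    ∃ β ∈ W, β.IsOrdinal ∧ ∃ h ∈ W, InjFun h x β ∧ SurjFun h x β := by
  obtain ⟨r, hrW, hr⟩ := hW.2.2.2.2.2.2.2 x hx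
  have hdef := CollapsesTo.definable hW.isTransClass hrW hx
  have hfun := fun a ha => CollapsesTo.existsUnique hW hrW hx hr (a := a) ha
  obtain ⟨β, hβW, hβ⟩ := hW.exists_replacement hx hdef hfun
  obtain ⟨h, hhW, hpairs, hh⟩ := hW.exists_graph hx hdef hfun
  have hh_func : ZFSet.IsFunc x β h := by
    refine ⟨fun q hq => ?_, fun a ha => ?_⟩
    · obtain ⟨a, b, rfl⟩ := hpairs q hq
      obtain ⟨ha, hb, hab⟩ := (hh a b).1 hq
      exact ZFSet.pair_mem_prod.2 ⟨ha, (hβ b).2 ⟨a, ha, hb, hab⟩⟩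
    · simpa only [hh, ha, true_and] using hfun a ha
  refine ⟨β, hβW, CollapsesTo.isOrdinal_image hW hrW hx hr hβ, h, hhW, ⟨hh_func, ?_⟩, hh_func, ?_⟩
  · intro a ha a' ha' b hab hab'
    exact CollapsesTo.injective hW hrW hx hr ha ha' ((hh a b).1 hab).2.2 ((hh a' b).1 hab').2.2
  · intro b hb
    obtain ⟨a, ha, hbW, hab⟩ := (hβ b).1 hb
    exact ⟨a, ha, (hh a b).2 ⟨ha, hbW, hab⟩⟩

/-! ### Cardinals and strong limits in an inner model -/

theorem IsCardIn.of_subset {S M : Set ZFSet.{u}} {μ : ZFSet.{u}} (hMS : M ⊆ S)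
    (hμ : IsCardIn S μ) : IsCardIn M μ :=
  ⟨hμ.1, fun α hα f hf => hμ.2 α hα f (hMS hf)⟩

theorem IsCardIn.not_forall_exists_of_definable {W : Set ZFSet.{u}} {μ α : ZFSet.{u}}
    {R : ZFSet.{u} → ZFSet.{u} → Prop} (hμ : IsCardIn W μ) (hW : ModelsZFCminus W) (hμW : μ ∈ W)
    (hα : α ∈ μ) (hR : DefinablePred W fun v : Fin 2 → W => R (v 0) (v 1))
    (hfun : ∀ ξ ∈ α, ∀ y y', R ξ y → R ξ y' → y = y') : ¬ ∀ y ∈ μ, ∃ ξ ∈ α, R ξ y := by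
  intro hsurj
  have hempty : ∅ ∈ μ := ZFSet.isOrdinal_empty.mem_of_subset_of_mem hμ.1 (ZFSet.empty_subset α) hα
  -- `R` may be partial on `α` or take values outside `μ`; totalizing by `∅` yields a graph in `W`.
  let R' ξ y := (R ξ y ∧ y ∈ μ) ∨ ((∀ z ∈ μ, ¬ R ξ z) ∧ y = ∅)
  have hR' : DefinablePred W fun v : Fin 2 → W => R' (v 0) (v 1) := by
    lift μ to W using hμW
    let e : W := ⟨∅, hW.2.1⟩
    exact .or (.and hR .mem)
      (.and (.ball hW.isTransClass (.not hR.comp₂)) (.eq (g := fun _ => e)))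
  have hmem : ∀ {ξ y}, R' ξ y → y ∈ μ := by
    rintro ξ y (⟨-, hy⟩ | ⟨-, rfl⟩)
    exacts [hy, hempty]
  have hR'_fun : ∀ ξ ∈ α, ∃! y, y ∈ W ∧ R' ξ y := by
    intro ξ hξ
    by_cases h : ∃ z ∈ μ, R ξ z
    · obtain ⟨z, hz, hξz⟩ := h
      refine ⟨z, ⟨hW.isTransClass μ hμW z hz, .inl ⟨hξz, hz⟩⟩, ?_⟩
      rintro y ⟨-, ⟨hξy, -⟩ | ⟨hnone, -⟩⟩
      exacts [hfun ξ hξ y z hξy hξz, absurd hξz (hnone z hz)]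
    · push Not at h
      refine ⟨∅, ⟨hW.2.1, .inr ⟨h, rfl⟩⟩, ?_⟩
      rintro y ⟨-, ⟨hξy, hy⟩ | ⟨-, rfl⟩⟩
      exacts [absurd hξy (h y hy), rfl]
  obtain ⟨g, hgW, hpairs, hg⟩ := hW.exists_graph (hW.isTransClass μ hμW α hα) hR' hR'_fun
  refine hμ.2 α hα g hgW ⟨⟨fun q hq => ?_, fun ξ hξ => ?_⟩, fun y hy => ?_⟩
  · obtain ⟨ξ, y, rfl⟩ := hpairs q hq
    obtain ⟨hξ, -, hξy⟩ := (hg ξ y).1 hq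
    exact ZFSet.pair_mem_prod.2 ⟨hξ, hmem hξy⟩
  · simpa only [hg, hξ, true_and] using hR'_fun ξ hξ
  · obtain ⟨ξ, hξ, hξy⟩ := hsurj y hy
    exact ⟨ξ, hξ, (hg ξ y).2 ⟨hξ, hW.isTransClass μ hμW y hy, .inl ⟨hξy, hy⟩⟩⟩

theorem IsCardIn.mem_of_definable {W : Set ZFSet.{u}} {μ α β : ZFSet.{u}}
    {R : ZFSet.{u} → ZFSet.{u} → Prop} (hμ : IsCardIn W μ) (hW : ModelsZFCminus W) (hμW : μ ∈ W)
    (hα : α ∈ μ) (hβ : β.IsOrdinal) (hR : DefinablePred W fun v : Fin 2 → W => R (v 0) (v 1))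
    (hfun : ∀ ξ ∈ α, ∀ y y', R ξ y → R ξ y' → y = y') (hsurj : ∀ y ∈ β, ∃ ξ ∈ α, R ξ y) :
    β ∈ μ :=
  (ZFSet.IsOrdinal.not_subset_iff_mem hμ.1 hβ).1 fun hμβ =>
    hμ.not_forall_exists_of_definable hW hμW hα hR hfun fun y hy => hsurj y (hμβ hy)

theorem IsCardIn.mem_of_mem_HIn {W : Set ZFSet.{u}} {μ ν : ZFSet.{u}} (hμ : IsCardIn W μ)
    (hW : ModelsZFCminus W) (hμW : μ ∈ W) (hν : ν.IsOrdinal) (h : ν ∈ HIn W μ) : ν ∈ μ := by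
  obtain ⟨-, t, -, ⟨hνt, -⟩, κ, hκ, f, hf, hf_func, hf_surj⟩ := h
  refine hμ.mem_of_definable (R := fun ξ y => ZFSet.pair ξ y ∈ f) hW hμW hκ hν ?_
    (fun ξ hξ y y' => (hf_func.2 ξ hξ).unique) fun y hy => hf_surj y (hνt hy)
  lift f to W using hf
  exact .pair_mem hW.isTransClass

theorem IsCardIn.mem_of_injFun_of_surjFun {W : Set ZFSet.{u}} {μ α β p q g h : ZFSet.{u}}
    (hμ : IsCardIn W μ) (hW : ModelsZFCminus W) (hμW : μ ∈ W) (hα : α ∈ μ) (hβ : β.IsOrdinal)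
    (hpq : p ⊆ q) (hpW : p ∈ W) (hgW : g ∈ W) (hg : InjFun g q α) (hhW : h ∈ W)
    (hh : SurjFun h p β) : β ∈ μ := by
  refine hμ.mem_of_definable (R := fun ξ y => ∃ z ∈ p, ZFSet.pair z ξ ∈ g ∧ ZFSet.pair z y ∈ h)
    hW hμW hα hβ ?_ ?_ fun y hy => ?_
  · lift p to W using hpW
    lift g to W using hgW
    lift h to W using hhW
    exact .bex hW.isTransClass (.and (.pair_mem hW.isTransClass) (.pair_mem hW.isTransClass))
  · rintro ξ - y y' ⟨z, hz, hzξ, hzy⟩ ⟨z', hz', hzξ', hzy'⟩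
    obtain rfl := hg.2 z (hpq hz) z' (hpq hz') ξ hzξ hzξ'
    exact (hh.1.2 z hz).unique hzy hzy'
  · obtain ⟨z, hz, hzy⟩ := hh.2 y hy
    obtain ⟨ξ, hzξ, -⟩ := hg.1.2 z (hpq hz)
    exact ⟨ξ, (ZFSet.pair_mem_prod.1 (hg.1.1 hzξ)).2, z, hz, hzξ, hzy⟩

theorem StrongLimitIn.of_subset {S M : Set ZFSet.{u}} {μ : ZFSet.{u}} (hS : ModelsZFC S)
    (hM : ModelsZFCminus M) (hMS : M ⊆ S) (hμS : μ ∈ S) (hμ : StrongLimitIn S μ) :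
    StrongLimitIn M μ := by
  refine ⟨hμ.1.of_subset hMS, hμ.2.1, fun κ hκ p hp hp_iff => ?_⟩
  obtain ⟨β, -, hβ, h, hhM, hh_inj, hh_surj⟩ := hM.exists_ordinal_bijection hp
  obtain ⟨q, hq, hq_iff⟩ := hS.2 κ (hS.1.isTransClass μ hμS κ hκ)
  obtain ⟨α, hα, g, hg, hg_inj⟩ := hμ.2.2 κ hκ q hq hq_iff
  have hpq : p ⊆ q := fun z hz => (hq_iff z).2 ⟨hMS ((hp_iff z).1 hz).1, ((hp_iff z).1 hz).2⟩
  exact ⟨β, hμ.1.mem_of_injFun_of_surjFun hS.1 hμS hα hβ hpq (hMS hp) hg hg_inj (hMS hhM) hh_surj,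
    h, hhM, hh_inj⟩

/-! ### Composing local definitions -/

theorem HIn_mono (S : Set ZFSet.{u}) {ν μ : ZFSet.{u}} (h : ν ⊆ μ) : HIn S ν ⊆ HIn S μ :=
  fun _ ⟨hx, t, ht, htx, κ, hκ, f⟩ => ⟨hx, t, ht, htx, κ, h hκ, f⟩

/-- `S` is correct about `θ`: the formula with witness `θ` defines over `S` an inner model `M`, and
`H^M_μ = θ^{H_μ}` for every strong limit cardinal `μ` of `S`. This is the requirement that
`LocallyDefinesInner` imposes on each model of `T`. -/
def LocallyDefinesIn (S : Set ZFSet.{u}) (θ : setL.BoundedFormula Empty 1) : Prop :=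
  InnerModelIn S (locClass S θ) ∧ ∀ μ ∈ S, StrongLimitIn S μ →
    HIn (locClass S θ) μ = definedClass (HIn S μ) θ

theorem InnerModelIn.trans {S M N : Set ZFSet.{u}} (hM : InnerModelIn S M)
    (hN : InnerModelIn M N) : InnerModelIn S N :=
  ⟨hN.1.trans hM.1, hN.2⟩

theorem THolds.of_subset {θT : setL.Sentence} {S M : Set ZFSet.{u}} (hS : THolds θT S)
    (hM : ModelsZFC M) (hMS : M ⊆ S) : THolds θT M :=
  ⟨hM, fun A hA => hS.2 A (hMS hA)⟩

theorem LocallyDefinesIn.exists_strongLimitIn_superset {S : Set ZFSet.{u}}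
    {θ : setL.BoundedFormula Empty 1} (hθ : LocallyDefinesIn S θ) (hS : ModelsZFC S)
    {ν : ZFSet.{u}} (hν : ν.IsOrdinal) : ∃ μ ∈ S, StrongLimitIn S μ ∧ ν ⊆ μ := by
  obtain ⟨μ, hμS, hμ, hνμ, -⟩ := hθ.1.2.2 ν hν
  exact ⟨μ, hμS, hμ, hμ.1.1.subset_of_mem (hμ.1.mem_of_mem_HIn hS.1 hμS hν hνμ)⟩

theorem LocallyDefinesIn.inf_relativize {S : Set ZFSet.{u}} {θ χ : setL.BoundedFormula Empty 1}
    (hS : ModelsZFC S) (hθ : LocallyDefinesIn S θ) (hχ : LocallyDefinesIn (locClass S θ) χ) :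
    LocallyDefinesIn S (θ ⊓ relativize θ χ) ∧
      locClass S (θ ⊓ relativize θ χ) = locClass (locClass S θ) χ := by
  set M := locClass S θ
  have hlimit : ∀ μ ∈ S, StrongLimitIn S μ → μ ∈ M ∧ StrongLimitIn M μ := fun μ hμS hμ =>
    ⟨hθ.1.2.2 μ hμ.1.1, hμ.of_subset hS hθ.1.2.1.1 hθ.1.1 hμS⟩
  have hH : ∀ μ ∈ S, StrongLimitIn S μ → HIn (locClass M χ) μ =
      definedClass (HIn S μ) (θ ⊓ relativize θ χ) := fun μ hμS hμ => by
    rw [definedClass_inf_relativize, ← hθ.2 μ hμS hμ]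
    exact hχ.2 μ (hlimit μ hμS hμ).1 (hlimit μ hμS hμ).2
  have hclass : locClass S (θ ⊓ relativize θ χ) = locClass M χ := by
    refine Subset.antisymm ?_ ?_
    · rintro x ⟨μ, hμS, hμ, hx⟩
      exact ((hH μ hμS hμ).symm.subset hx).1
    · rintro x ⟨ν, hνM, hν, hx⟩
      obtain ⟨μ, hμS, hμ, hνμ⟩ := hθ.exists_strongLimitIn_superset hS hν.1.1
      have hxμ := HIn_mono _ hνμ ((hχ.2 ν hνM hν).symm.subset hx)
      exact ⟨μ, hμS, hμ, (hH μ hμS hμ).subset hxμ⟩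
  rw [LocallyDefinesIn, hclass]
  exact ⟨⟨hθ.1.trans hχ.1, hH⟩, rfl⟩

theorem local_relativization_general (θT : setL.Sentence) (θφ θψ : setL.BoundedFormula Empty 1)
    (hφ : LocallyDefinesInner.{u} θT θφ) (hψ : LocallyDefinesInner.{u} θT θψ) :
    ∃ θτ : setL.BoundedFormula Empty 1, LocallyDefinesInner.{u} θT θτ ∧
      ∀ S : Set ZFSet.{u}, IsInnerModel S → THolds θT S →
        locClass S θτ = locClass (locClass S θφ) θψ := by
  have hcomp : ∀ S : Set ZFSet.{u}, IsInnerModel S → THolds θT S →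
      LocallyDefinesIn S (θφ ⊓ relativize θφ θψ) ∧
        locClass S (θφ ⊓ relativize θφ θψ) = locClass (locClass S θφ) θψ := fun S hS hTS => by
    have hM : LocallyDefinesIn S θφ := hφ S hS hTS
    exact hM.inf_relativize hS.1
      (hψ (locClass S θφ) hM.1.2 (hTS.of_subset hM.1.2.1 hM.1.1))
  exact ⟨_, fun S hS hTS => (hcomp S hS hTS).1, fun S hS hTS => (hcomp S hS hTS).2⟩

/-- Let `T = ZFC + "∀ set of ordinals A, L[A] ⊨ θT"` be a nice extension
of ZFC (so `θT` is Π₂), and let `φ, ψ` be formulas (given by witnessing formulas `θφ, θψ`)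
which locally define inner models over `T`.  Then there is a formula `τ` (given by a
witnessing formula `θτ`) which locally defines an inner model over `T` and which is,
provably over `T`, equivalent to the relativization `ψ^φ`:  in every model `S` of `T`,
`τ^S = ψ^{φ^S}`. -/
theorem local_relativization (θT : setL.Sentence) (hθT : LevyPi 2 θT)
    (θφ θψ : setL.BoundedFormula Empty 1)
    (hφ : LocallyDefinesInner.{u} θT θφ) (hψ : LocallyDefinesInner.{u} θT θψ) :
    ∃ θτ : setL.BoundedFormula Empty 1, LocallyDefinesInner.{u} θT θτ ∧
      ∀ S : Set ZFSet.{u}, IsInnerModel S → THolds θT S →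
        locClass S θτ = locClass (locClass S θφ) θψ := by
  exact local_relativization_general θT θφ θψ hφ hψ
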